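/- Fix real numbers x0 < x1 and let α : ℝ → ℝ be Lebesgue integrable on (x0, x1), with ‖α‖ := ∫_{x0}^{x1} |α|. Then for every ω ∈ ℝ: e^{−‖α‖} ≤ |E_α^{(x0,x1)}(ω)|, e^{−‖α‖} ≤ |E_{−α}^{(x0,x1)}(ω)|, and e^{−‖α‖} ≤ |E_α^{(x0,x1)}(ω) + E_{−α}^{(x0,x1)}(ω)|. -/

import Mathlib

open MeasureTheory

/-- The iterates `A_ω^j 𝟙` of the conjugate-linear Volterra operator
`A_ω f(t) = ∫_{x0}^t α(s) e^{2i(s−x0)ω} conj(f(s)) ds`. -/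
noncomputable def Aiter (x0 : ℝ) (α : ℝ → ℝ) (ω : ℂ) : ℕ → ℝ → ℂ
  | 0 => fun _ => 1
  | j + 1 => fun t =>
      ∫ s in x0..t,
        (α s : ℂ) * Complex.exp (2 * Complex.I * ((s : ℂ) - (x0 : ℂ)) * ω)
          * (starRingEnd ℂ) (Aiter x0 α ω j s)

/-- The harmonic exponential `E_α^{(x0,y)}(ω) = Σ_{j≥0} A_ω^j 𝟙(y)`. -/
noncomputable def harmE (x0 y : ℝ) (α : ℝ → ℝ) (ω : ℂ) : ℂ :=
  ∑' j : ℕ, Aiter x0 α ω j y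

/-!
The map `z ↦ α(s) e^{2i(s−x0)ω} conj z` is a symmetric operator `K(s)` of the real inner product
space `ℂ`, of norm `|α(s)|` when `ω` is real, and `E_{±α}` is the Peano–Baker series of `±K` applied
to `1`. Because `K` is symmetric, `⟪u, w⟫` is constant along solutions of `u' = K u`, `w' = -K w`,
so that `⟪E_α, E_{−α}⟫ = 1`. Since each factor has modulus at most `e^{‖α‖}`, Cauchy–Schwarz bounds
the other one from below by `e^{−‖α‖}`, and
`|E_α + E_{−α}|² = |E_α − E_{−α}|² + 4 ⟪E_α, E_{−α}⟫ ≥ 4`.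
-/

section AbsoluteContinuity

variable {a b : ℝ}

lemma absolutelyContinuousOnInterval_of_dist_le {X Y : Type*} [PseudoMetricSpace X]
    [PseudoMetricSpace Y] {f : ℝ → X} {g : ℝ → Y} (hg : AbsolutelyContinuousOnInterval g a b)
    (h : ∀ x ∈ Set.uIcc a b, ∀ y ∈ Set.uIcc a b, dist (f x) (f y) ≤ dist (g x) (g y)) :
    AbsolutelyContinuousOnInterval f a b := by
  rw [absolutelyContinuousOnInterval_iff] at hg ⊢
  intro ε hε
  obtain ⟨δ, hδ, hgδ⟩ := hg ε hε
  refine ⟨δ, hδ, fun E hE hlength => lt_of_le_of_lt (Finset.sum_le_sum fun i hi => ?_)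
    (hgδ E hE hlength)⟩
  exact h _ (hE.1 i hi).1 _ (hE.1 i hi).2

lemma absolutelyContinuousOnInterval_const {X : Type*} [PseudoMetricSpace X] (c : X) :
    AbsolutelyContinuousOnInterval (fun _ => c) a b :=
  (LipschitzWith.const c).lipschitzOnWith.absolutelyContinuousOnInterval

lemma absolutelyContinuousOnInterval_pow {f : ℝ → ℝ}
    (hf : AbsolutelyContinuousOnInterval f a b) (n : ℕ) :
    AbsolutelyContinuousOnInterval (fun x => f x ^ n) a b := by
  induction n with
  | zero => simpa only [pow_zero] using absolutelyContinuousOnInterval_const 1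
  | succ n ih => simpa only [pow_succ] using ih.fun_mul hf

lemma absolutelyContinuousOnInterval_norm {V : Type*} [SeminormedAddCommGroup V] {f : ℝ → V}
    (hf : AbsolutelyContinuousOnInterval f a b) :
    AbsolutelyContinuousOnInterval (fun x => ‖f x‖) a b :=
  absolutelyContinuousOnInterval_of_dist_le hf fun x _ y _ =>
    (dist_norm_norm_le (f x) (f y)).trans_eq (dist_eq_norm _ _).symm

lemma absolutelyContinuousOnInterval_inner {V : Type*} [SeminormedAddCommGroup V]
    [InnerProductSpace ℝ V] {f g : ℝ → V} (hf : AbsolutelyContinuousOnInterval f a b)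
    (hg : AbsolutelyContinuousOnInterval g a b) :
    AbsolutelyContinuousOnInterval (fun x => inner ℝ (f x) (g x)) a b := by
  have hsq {h : ℝ → V} (hh : AbsolutelyContinuousOnInterval h a b) :
      AbsolutelyContinuousOnInterval (fun x => ‖h x‖ * ‖h x‖) a b :=
    (absolutelyContinuousOnInterval_norm hh).fun_mul (absolutelyContinuousOnInterval_norm hh)
  simpa only [real_inner_eq_norm_add_mul_self_sub_norm_mul_self_sub_norm_mul_self_div_two,
    div_eq_inv_mul] using (((hsq (hf.fun_add hg)).fun_sub (hsq hf)).fun_sub (hsq hg)).const_mul 2⁻¹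

lemma absolutelyContinuousOnInterval_primitive {V : Type*} [NormedAddCommGroup V]
    [NormedSpace ℝ V] {f : ℝ → V} (hf : IntervalIntegrable f volume a b) :
    AbsolutelyContinuousOnInterval (fun x => ∫ s in a..x, f s) a b := by
  refine absolutelyContinuousOnInterval_of_dist_le
    (hf.norm.absolutelyContinuousOnInterval_intervalIntegral Set.left_mem_uIcc) fun x hx y hy => ?_
  have hint {z : ℝ} (hz : z ∈ Set.uIcc a b) : IntervalIntegrable f volume a z :=
    hf.mono_set (Set.uIcc_subset_uIcc_left hz)
  rw [dist_eq_norm, Real.dist_eq,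
    intervalIntegral.integral_interval_sub_left (hint hx) (hint hy),
    intervalIntegral.integral_interval_sub_left (hint hx).norm (hint hy).norm]
  exact intervalIntegral.norm_integral_le_abs_integral_norm

end AbsoluteContinuity

lemma integral_mul_primitive_pow_div_factorial {f : ℝ → ℝ} {a b : ℝ}
    (hf : IntervalIntegrable f volume a b) (j : ℕ) :
    ∫ s in a..b, f s * ((∫ r in a..s, f r) ^ j / (j.factorial : ℝ))
      = (∫ s in a..b, f s) ^ (j + 1) / ((j + 1).factorial : ℝ) := by
  set F : ℝ → ℝ := fun x => ∫ s in a..x, f s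
  have hderiv : ∀ᵐ s, s ∈ Set.uIoc a b → f s * (F s ^ j / (j.factorial : ℝ))
      = deriv (fun x => F x ^ (j + 1)) s / ((j + 1).factorial : ℝ) := by
    filter_upwards [hf.ae_hasDerivAt_integral] with s hs hmem
    have hF : HasDerivAt F (f s) s := hs (Set.uIoc_subset_uIcc hmem) a Set.left_mem_uIcc
    rw [(hF.fun_pow (j + 1)).deriv, Nat.factorial_succ]
    push_cast
    field_simp
  rw [intervalIntegral.integral_congr_ae hderiv, intervalIntegral.integral_div,
    (absolutelyContinuousOnInterval_pow
      (absolutelyContinuousOnInterval_primitive hf) (j + 1)).integral_deriv_eq_sub]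
  simp only [intervalIntegral.integral_same, zero_pow (Nat.succ_ne_zero j), sub_zero]

lemma intervalIntegrable_clm_apply {V W : Type*} [NormedAddCommGroup V] [NormedSpace ℝ V]
    [NormedAddCommGroup W] [NormedSpace ℝ W] {K : ℝ → V →L[ℝ] W} {f : ℝ → V} {a b : ℝ}
    {μ : Measure ℝ} (hK : IntervalIntegrable K μ a b) (hf : ContinuousOn f (Set.uIcc a b)) :
    IntervalIntegrable (fun s => K s (f s)) μ a b := by
  obtain ⟨C, hC⟩ := isCompact_uIcc.exists_bound_of_continuousOn hf
  rw [intervalIntegrable_iff] at hK ⊢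
  refine (ContinuousLinearMap.id ℝ (V →L[ℝ] W)).integrable_of_bilin_of_bdd_right C hK ?_ ?_
  · exact (hf.aestronglyMeasurable measurableSet_uIcc).mono_set Set.uIoc_subset_uIcc
  · exact (ae_restrict_mem measurableSet_uIoc).mono fun s hs => hC s (Set.uIoc_subset_uIcc hs)

lemma intervalIntegrable_of_mem_Icc {E : Type*} [NormedAddCommGroup E] {f : ℝ → E}
    {μ : Measure ℝ} {a b t : ℝ} (hf : IntervalIntegrable f μ a b) (ht : t ∈ Set.Icc a b) :
    IntervalIntegrable f μ a t :=
  hf.mono_set (Set.uIcc_subset_uIcc_left (Set.Icc_subset_uIcc ht))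

section PeanoBaker

variable {V : Type*} [NormedAddCommGroup V] [NormedSpace ℝ V] {K : ℝ → V →L[ℝ] V} {a b t : ℝ}

/-- The `j`-th term of the Peano–Baker series: the difference of two consecutive Picard iterates
for the linear equation `u' = K u`, `u a = v`. -/
noncomputable def peanoBakerTerm (K : ℝ → V →L[ℝ] V) (a : ℝ) (v : V) : ℕ → ℝ → V
  | 0 => fun _ => v
  | j + 1 => fun t => ∫ s in a..t, K s (peanoBakerTerm K a v j s)

/-- The Peano–Baker series (time-ordered exponential) of `K` applied to `v`: the solution at time
`t` of `u' = K u`, `u a = v`. -/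
noncomputable def peanoBakerSeries (K : ℝ → V →L[ℝ] V) (a : ℝ) (v : V) (t : ℝ) : V :=
  ∑' j : ℕ, peanoBakerTerm K a v j t

lemma continuousOn_peanoBakerTerm (hK : IntervalIntegrable K volume a b) (v : V) (j : ℕ) :
    ContinuousOn (peanoBakerTerm K a v j) (Set.uIcc a b) := by
  induction j with
  | zero => exact continuousOn_const
  | succ j ih =>
    exact intervalIntegral.continuousOn_primitive_interval'
      (intervalIntegrable_clm_apply hK ih) Set.left_mem_uIcc

lemma norm_peanoBakerTerm_le_primitive (hat : a ≤ t) (hK : IntervalIntegrable K volume a t)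
    (v : V) (j : ℕ) :
    ‖peanoBakerTerm K a v j t‖ ≤ (∫ s in a..t, ‖K s‖) ^ j / (j.factorial : ℝ) * ‖v‖ := by
  induction j generalizing t with
  | zero => simp [peanoBakerTerm]
  | succ j ih =>
    rw [← integral_mul_primitive_pow_div_factorial hK.norm j,
      ← intervalIntegral.integral_mul_const]
    refine intervalIntegral.norm_integral_le_of_norm_le hat (.of_forall fun s hs => ?_) ?_
    · calc ‖K s (peanoBakerTerm K a v j s)‖
          ≤ ‖K s‖ * ‖peanoBakerTerm K a v j s‖ := (K s).le_opNorm _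
        _ ≤ ‖K s‖ * ((∫ r in a..s, ‖K r‖) ^ j / (j.factorial : ℝ) * ‖v‖) := by
            gcongr
            exact ih hs.1.le (intervalIntegrable_of_mem_Icc hK (Set.Ioc_subset_Icc_self hs))
        _ = _ := (mul_assoc _ _ _).symm
    · have hprimitive : ContinuousOn (fun s => ∫ r in a..s, ‖K r‖) (Set.uIcc a t) :=
        intervalIntegral.continuousOn_primitive_interval' hK.norm Set.left_mem_uIcc
      exact (hK.norm.mul_continuousOn ((hprimitive.pow j).div_const (j.factorial : ℝ))).mul_const _

lemma norm_peanoBakerTerm_le (hK : IntervalIntegrable K volume a b) (v : V) (j : ℕ)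
    (ht : t ∈ Set.Icc a b) :
    ‖peanoBakerTerm K a v j t‖ ≤ (∫ s in a..b, ‖K s‖) ^ j / (j.factorial : ℝ) * ‖v‖ := by
  have hnonneg : 0 ≤ ∫ s in a..t, ‖K s‖ :=
    intervalIntegral.integral_nonneg ht.1 fun _ _ => norm_nonneg _
  have hmono : ∫ s in a..t, ‖K s‖ ≤ ∫ s in a..b, ‖K s‖ :=
    intervalIntegral.integral_mono_interval le_rfl ht.1 ht.2
      (.of_forall fun _ => norm_nonneg _) hK.norm
  refine (norm_peanoBakerTerm_le_primitive ht.1 (intervalIntegrable_of_mem_Icc hK ht) v j).trans ?_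
  gcongr

lemma norm_peanoBakerSeries_le (hab : a ≤ b) (hK : IntervalIntegrable K volume a b) (v : V) :
    ‖peanoBakerSeries K a v b‖ ≤ Real.exp (∫ s in a..b, ‖K s‖) * ‖v‖ := by
  have hexp : HasSum (fun j : ℕ => (∫ s in a..b, ‖K s‖) ^ j / (j.factorial : ℝ))
      (Real.exp (∫ s in a..b, ‖K s‖)) := by
    rw [Real.exp_eq_exp_ℝ]
    exact NormedSpace.expSeries_div_hasSum_exp _
  exact tsum_of_norm_bounded (hexp.mul_right ‖v‖)
    fun j => norm_peanoBakerTerm_le hK v j (Set.right_mem_Icc.mpr hab)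

variable [CompleteSpace V]

lemma hasSum_peanoBakerSeries (hat : a ≤ t) (hK : IntervalIntegrable K volume a t) (v : V) :
    HasSum (fun j => peanoBakerTerm K a v j t) (peanoBakerSeries K a v t) :=
  (Summable.of_norm_bounded ((Real.summable_pow_div_factorial _).mul_right _)
    fun j => norm_peanoBakerTerm_le hK v j (Set.right_mem_Icc.mpr hat)).hasSum

lemma continuousOn_peanoBakerSeries (hab : a ≤ b) (hK : IntervalIntegrable K volume a b) (v : V) :
    ContinuousOn (peanoBakerSeries K a v) (Set.uIcc a b) := by
  refine continuousOn_tsum (continuousOn_peanoBakerTerm hK v)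
    ((Real.summable_pow_div_factorial (∫ s in a..b, ‖K s‖)).mul_right ‖v‖) fun j t ht => ?_
  exact norm_peanoBakerTerm_le hK v j (Set.uIcc_of_le hab ▸ ht)

lemma hasSum_integral_peanoBakerTerm (hat : a ≤ t) (hK : IntervalIntegrable K volume a t)
    (v : V) :
    HasSum (fun j => ∫ s in a..t, K s (peanoBakerTerm K a v j s))
      (∫ s in a..t, K s (peanoBakerSeries K a v s)) := by
  have hmem {s : ℝ} (hs : s ∈ Set.uIoc a t) : s ∈ Set.Icc a t :=
    Set.Ioc_subset_Icc_self (Set.uIoc_of_le hat ▸ hs)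
  have hsummable := (Real.summable_pow_div_factorial (∫ s in a..t, ‖K s‖)).mul_right ‖v‖
  refine intervalIntegral.hasSum_integral_of_dominated_convergence
    (fun j s => ‖K s‖ * ((∫ r in a..t, ‖K r‖) ^ j / (j.factorial : ℝ) * ‖v‖))
    (fun j => ?_) (fun j => .of_forall fun s hs => ?_) (.of_forall fun s _ => ?_) ?_
    (.of_forall fun s hs => ?_)
  · exact (intervalIntegrable_clm_apply hK
      (continuousOn_peanoBakerTerm hK v j)).def'.aestronglyMeasurable
  · exact (K s).le_opNorm_of_le (norm_peanoBakerTerm_le hK v j (hmem hs))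
  · exact hsummable.mul_left _
  · simp only [tsum_mul_left]
    exact hK.norm.mul_const _
  · exact (hasSum_peanoBakerSeries (hmem hs).1
      (intervalIntegrable_of_mem_Icc hK (hmem hs)) v).mapL (K s)

lemma peanoBakerSeries_eq_add_integral (hat : a ≤ t) (hK : IntervalIntegrable K volume a t)
    (v : V) :
    peanoBakerSeries K a v t = v + ∫ s in a..t, K s (peanoBakerSeries K a v s) := by
  rw [peanoBakerSeries, (hasSum_peanoBakerSeries hat hK v).summable.tsum_eq_zero_add]
  exact congrArg (v + ·) (hasSum_integral_peanoBakerTerm hat hK v).tsum_eq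

end PeanoBaker

section SymmetricGenerator

variable {V : Type*} [NormedAddCommGroup V] [InnerProductSpace ℝ V]

lemma two_mul_le_norm_add_of_sq_le_inner {x y : V} {r : ℝ} (h : r ^ 2 ≤ inner ℝ x y) :
    2 * r ≤ ‖x + y‖ := by
  refine le_of_pow_le_pow_left₀ two_ne_zero (norm_nonneg _) ?_
  have hpolarization : ‖x + y‖ ^ 2 = ‖x - y‖ ^ 2 + 4 * inner ℝ x y := by
    rw [norm_add_sq_real, norm_sub_sq_real]
    ring
  nlinarith [sq_nonneg ‖x - y‖]

variable [CompleteSpace V] {a b : ℝ}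

lemma inner_eq_inner_of_primitive {f g φ ψ : ℝ → V} {v w : V}
    (hφ : IntervalIntegrable φ volume a b) (hψ : IntervalIntegrable ψ volume a b)
    (hf : ∀ t ∈ Set.uIcc a b, f t = v + ∫ s in a..t, φ s)
    (hg : ∀ t ∈ Set.uIcc a b, g t = w + ∫ s in a..t, ψ s)
    (hzero : ∀ t ∈ Set.uIcc a b, inner ℝ (f t) (ψ t) + inner ℝ (φ t) (g t) = 0) :
    inner ℝ (f b) (g b) = inner ℝ v w := by
  have hac := absolutelyContinuousOnInterval_inner
    ((absolutelyContinuousOnInterval_const v).fun_add (absolutelyContinuousOnInterval_primitive hφ))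
    ((absolutelyContinuousOnInterval_const w).fun_add (absolutelyContinuousOnInterval_primitive hψ))
  obtain ⟨C, hC⟩ := hac.const_of_ae_hasDerivAt_zero <| by
    filter_upwards [hφ.ae_hasDerivAt_integral, hψ.ae_hasDerivAt_integral] with t hφt hψt ht
    rw [← hzero t ht, hf t ht, hg t ht]
    exact ((hφt ht a Set.left_mem_uIcc).const_add v).inner ℝ
      ((hψt ht a Set.left_mem_uIcc).const_add w)
  have hconst := (hC b Set.right_mem_uIcc).trans (hC a Set.left_mem_uIcc).symm
  rw [hf b Set.right_mem_uIcc, hg b Set.right_mem_uIcc]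
  simpa only [intervalIntegral.integral_same, add_zero] using hconst

variable {K : ℝ → V →L[ℝ] V}

lemma inner_peanoBakerSeries_neg (hab : a ≤ b) (hK : IntervalIntegrable K volume a b)
    (hsymm : ∀ s ∈ Set.Icc a b, (K s).IsSymmetric) (v w : V) :
    inner ℝ (peanoBakerSeries K a v b) (peanoBakerSeries (-K) a w b) = inner ℝ v w := by
  have hsolution {L : ℝ → V →L[ℝ] V} (hL : IntervalIntegrable L volume a b) (u : V) :
      ∀ t ∈ Set.uIcc a b,
        peanoBakerSeries L a u t = u + ∫ s in a..t, L s (peanoBakerSeries L a u s) := by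
    intro t ht
    rw [Set.uIcc_of_le hab] at ht
    exact peanoBakerSeries_eq_add_integral ht.1 (intervalIntegrable_of_mem_Icc hL ht) u
  refine inner_eq_inner_of_primitive
    (intervalIntegrable_clm_apply hK (continuousOn_peanoBakerSeries hab hK v))
    (intervalIntegrable_clm_apply hK.neg (continuousOn_peanoBakerSeries hab hK.neg w))
    (hsolution hK v) (hsolution hK.neg w) fun t ht => ?_
  have hKt : inner ℝ (K t (peanoBakerSeries K a v t)) (peanoBakerSeries (-K) a w t)
      = inner ℝ (peanoBakerSeries K a v t) (K t (peanoBakerSeries (-K) a w t)) :=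
    hsymm t (Set.uIcc_of_le hab ▸ ht) _ _
  rw [hKt, Pi.neg_apply, _root_.neg_apply, inner_neg_right, neg_add_cancel]

lemma exp_neg_mul_norm_le_norm_peanoBakerSeries (hab : a ≤ b)
    (hK : IntervalIntegrable K volume a b) (hsymm : ∀ s ∈ Set.Icc a b, (K s).IsSymmetric)
    (v : V) :
    Real.exp (-∫ s in a..b, ‖K s‖) * ‖v‖ ≤ ‖peanoBakerSeries K a v b‖ := by
  rcases eq_or_ne v 0 with rfl | hv
  · simp only [norm_zero, mul_zero, norm_nonneg]
  have hupper : ‖peanoBakerSeries (-K) a v b‖ ≤ Real.exp (∫ s in a..b, ‖K s‖) * ‖v‖ := by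
    simpa only [Pi.neg_apply, norm_neg] using norm_peanoBakerSeries_le hab hK.neg v
  have hcs : ‖v‖ * ‖v‖ ≤
      ‖peanoBakerSeries K a v b‖ * (Real.exp (∫ s in a..b, ‖K s‖) * ‖v‖) :=
    calc ‖v‖ * ‖v‖
        = inner ℝ (peanoBakerSeries K a v b) (peanoBakerSeries (-K) a v b) := by
          rw [inner_peanoBakerSeries_neg hab hK hsymm, real_inner_self_eq_norm_mul_norm]
      _ ≤ ‖peanoBakerSeries K a v b‖ * ‖peanoBakerSeries (-K) a v b‖ := real_inner_le_norm _ _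
      _ ≤ _ := by gcongr
  rw [← mul_assoc] at hcs
  rw [Real.exp_neg, inv_mul_le_iff₀ (Real.exp_pos _), mul_comm]
  exact le_of_mul_le_mul_right hcs (norm_pos_iff.mpr hv)

theorem harmonic_exponential_lower_bound_general (hab : a ≤ b)
    (hK : IntervalIntegrable K volume a b) (hsymm : ∀ s ∈ Set.Icc a b, (K s).IsSymmetric)
    (v : V) :
    Real.exp (-∫ s in a..b, ‖K s‖) * ‖v‖ ≤ ‖peanoBakerSeries K a v b‖ ∧
    Real.exp (-∫ s in a..b, ‖K s‖) * ‖v‖ ≤ ‖peanoBakerSeries (-K) a v b‖ ∧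
    2 * ‖v‖ ≤ ‖peanoBakerSeries K a v b + peanoBakerSeries (-K) a v b‖ := by
  refine ⟨exp_neg_mul_norm_le_norm_peanoBakerSeries hab hK hsymm v, ?_, ?_⟩
  · have hsymm_neg : ∀ s ∈ Set.Icc a b, ((-K) s).IsSymmetric := fun s hs x y => by
      simpa using hsymm s hs x y
    simpa only [Pi.neg_apply, norm_neg] using
      exp_neg_mul_norm_le_norm_peanoBakerSeries hab hK.neg hsymm_neg v
  · refine two_mul_le_norm_add_of_sq_le_inner ?_
    rw [inner_peanoBakerSeries_neg hab hK hsymm, real_inner_self_eq_norm_sq]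

end SymmetricGenerator

section HarmonicKernel

lemma isSymmetric_smul_conjCLE (c : ℂ) : (c • (Complex.conjCLE : ℂ →L[ℝ] ℂ)).IsSymmetric := by
  intro z w
  have hconj : w * starRingEnd ℂ (c * starRingEnd ℂ z)
      = starRingEnd ℂ (c * starRingEnd ℂ w * starRingEnd ℂ z) := by
    simp only [map_mul, Complex.conj_conj]
    ring
  change inner ℝ (c * starRingEnd ℂ z) w = inner ℝ z (c * starRingEnd ℂ w)
  rw [Complex.inner, Complex.inner, hconj, Complex.conj_re]

/-- The kernel `z ↦ α(s) e^{2i(s−x0)ω} conj z` of the Volterra operator `A_ω`. Being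
conjugate-linear over `ℂ`, it is encoded as a real-linear operator. -/
noncomputable def harmonicKernel (x0 : ℝ) (α : ℝ → ℝ) (ω : ℂ) (s : ℝ) : ℂ →L[ℝ] ℂ :=
  ((α s : ℂ) * Complex.exp (2 * Complex.I * ((s : ℂ) - (x0 : ℂ)) * ω)) •
    (Complex.conjCLE : ℂ →L[ℝ] ℂ)

lemma harmonicKernel_neg (x0 : ℝ) (α : ℝ → ℝ) (ω : ℂ) :
    harmonicKernel x0 (fun s => -α s) ω = -harmonicKernel x0 α ω := by
  ext s z
  simp [harmonicKernel]

lemma norm_harmonicKernel (x0 : ℝ) (α : ℝ → ℝ) (ω s : ℝ) :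
    ‖harmonicKernel x0 α ω s‖ = |α s| := by
  have hphase : 2 * Complex.I * ((s : ℂ) - (x0 : ℂ)) * (ω : ℂ)
      = ((2 * (s - x0) * ω : ℝ) : ℂ) * Complex.I := by
    push_cast
    ring
  rw [harmonicKernel, norm_smul, Complex.conjCLE_norm, norm_mul, hphase,
    Complex.norm_exp_ofReal_mul_I, Complex.norm_real, Real.norm_eq_abs, mul_one, mul_one]

lemma intervalIntegrable_harmonicKernel {x0 x1 : ℝ} {α : ℝ → ℝ}
    (hα : IntervalIntegrable α volume x0 x1) (ω : ℂ) :
    IntervalIntegrable (harmonicKernel x0 α ω) volume x0 x1 := by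
  have hα' : IntervalIntegrable (fun s => (α s : ℂ)) volume x0 x1 := ⟨hα.1.ofReal, hα.2.ofReal⟩
  have hphase : Continuous fun s : ℝ =>
      Complex.exp (2 * Complex.I * ((s : ℂ) - (x0 : ℂ)) * ω) := by
    fun_prop
  have hcoeff := hα'.mul_continuousOn hphase.continuousOn
  exact ⟨hcoeff.1.smul_const _, hcoeff.2.smul_const _⟩

lemma isSymmetric_harmonicKernel (x0 : ℝ) (α : ℝ → ℝ) (ω : ℂ) (s : ℝ) :
    (harmonicKernel x0 α ω s).IsSymmetric :=
  isSymmetric_smul_conjCLE _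

lemma Aiter_eq_peanoBakerTerm (x0 : ℝ) (α : ℝ → ℝ) (ω : ℂ) (j : ℕ) :
    Aiter x0 α ω j = peanoBakerTerm (harmonicKernel x0 α ω) x0 1 j := by
  induction j with
  | zero => rfl
  | succ j ih =>
    funext t
    rw [Aiter, ih]
    rfl

lemma harmE_eq_peanoBakerSeries (x0 y : ℝ) (α : ℝ → ℝ) (ω : ℂ) :
    harmE x0 y α ω = peanoBakerSeries (harmonicKernel x0 α ω) x0 1 y := by
  simp only [harmE, peanoBakerSeries, Aiter_eq_peanoBakerTerm]

end HarmonicKernel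

/-- Proposition (prop-E-bound-from-zero): each of `E_α`, `E_{−α}` and `E_α + E_{−α}`
is bounded below in modulus by `e^{−‖α‖}` on the real line. -/
theorem harmonic_exponential_lower_bound
    (x0 x1 : ℝ) (hx : x0 < x1)
    (α : ℝ → ℝ) (hα : IntegrableOn α (Set.Ioo x0 x1))
    (N : ℝ) (hN : N = ∫ x in x0..x1, |α x|) :
    ∀ ω : ℝ,
      Real.exp (-N) ≤ ‖harmE x0 x1 α (ω : ℂ)‖ ∧
      Real.exp (-N) ≤ ‖harmE x0 x1 (fun s => -α s) (ω : ℂ)‖ ∧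
      Real.exp (-N) ≤ ‖harmE x0 x1 α (ω : ℂ) + harmE x0 x1 (fun s => -α s) (ω : ℂ)‖ := by
  intro ω
  have hα' := (intervalIntegrable_iff_integrableOn_Ioo_of_le hx.le).mpr hα
  have hbounds := harmonic_exponential_lower_bound_general hx.le
    (intervalIntegrable_harmonicKernel hα' ω)
    (fun s _ => isSymmetric_harmonicKernel x0 α ω s) (1 : ℂ)
  simp only [norm_harmonicKernel, ← hN, norm_one, mul_one, ← harmonicKernel_neg,
    ← harmE_eq_peanoBakerSeries] at hbounds
  have hN_nonneg : 0 ≤ N := hN ▸ intervalIntegral.integral_nonneg hx.le fun _ _ => abs_nonneg _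
  have hexp : Real.exp (-N) ≤ 1 := Real.exp_le_one_iff.mpr (neg_nonpos.mpr hN_nonneg)
  exact ⟨hbounds.1, hbounds.2.1, (hexp.trans one_le_two).trans hbounds.2.2⟩
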